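/- arXiv:1902.02152 — 2 statements merged into one kernel-verified Lean document; each statement's English description precedes it below -/
import Mathlib

section
/- For every natural number M there exists a constant c'(M) ∈ ℕ with the following property: for every function ρ : ℕ → ℕ with ρ(l) ≥ c'(M) for all l, the probability that G_R contains a subgroup H with index [G_R : H] ≤ M admitting a surjective homomorphism H ↠ ℤ, for R chosen uniformly in S_l^{ρ(l)}, tends to 0 as l → ∞. -/
open Filter

/-- The type of reduced words of length `l` in the alphabet `X ∪ X⁻¹`, where
`X = {x_1, …, x_n}`; a word is a list of letters `(i, b)`, the letter being `x_i` if
`b = true` and `x_i⁻¹` if `b = false`, and it is reduced if it equals its free reduction. -/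
def ReducedWord (n l : ℕ) : Type :=
  {w : List (Fin n × Bool) // FreeGroup.reduce w = w ∧ w.length = l}

/-- The probability, for a tuple `R` of `k` relators chosen uniformly and independently among
the reduced words of length `l`, that the predicate `P` holds of the corresponding tuple of
elements of the free group on `n` generators. -/
noncomputable def wordProb (n l k : ℕ) (P : (Fin k → FreeGroup (Fin n)) → Prop) : ℝ :=
  (Nat.card {R : Fin k → ReducedWord n l // P fun i => FreeGroup.mk (R i).1} : ℝ) /
    (Nat.card (ReducedWord n l) : ℝ) ^ k

/-!
Let `m` be odd. A surjection onto `ℤ` from a subgroup of index at most `M` of the random group pulls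
back to a subgroup `H` of the free group, of the same index, and reduces modulo `m` to a surjection
`φ : H → ℤ/m` whose kernel contains all relators. The number of `H` depends only on `n` and `M`, and
since `H` has rank at most `M n`, each `H` has at most `m ^ (M n)` homomorphisms to `ℤ/m`.

A long random reduced word lies in `ker φ` with probability at most `2 / m`, say. Indeed, the
averaging operator of the nonbacktracking walk on the finite Schreier graph of `ker φ` does not
increase the squared `ℓ²`-norm, and the amount lost in a step is a sum of variances over the next
letter. As the total loss is finite, the probability of ending at a given vertex asymptotically
forgets the first letter, and is then asymptotically invariant under translation of the starting
vertex by squares `g ^ 2`. Because `m` is odd, the squares of lifts of the elements of `ℤ/m` lie in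
`m` distinct cosets of `ker φ`, which are therefore hit with asymptotically equal probability.

With at least `M n + 1` independent relators, the union bound is `O(m ^ (M n) / m ^ (M n + 1))`, and
`m` is arbitrary.
-/

section NonbacktrackingWalk

open scoped BigOperators

lemma sq_sub_le_expect_sq_sub_sq_expect {ι : Type*} (s : Finset ι) (x : ι → ℝ) {i j : ι}
    (hi : i ∈ s) (hj : j ∈ s) :
    (x i - x j) ^ 2 ≤ 4 * s.card * (𝔼 k ∈ s, x k ^ 2 - (𝔼 k ∈ s, x k) ^ 2) := by
  set μ := 𝔼 k ∈ s, x k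
  have variance_eq : s.card * (𝔼 k ∈ s, x k ^ 2 - μ ^ 2) = ∑ k ∈ s, (x k - μ) ^ 2 := by
    have hsum : ∑ k ∈ s, x k = s.card * μ := (Finset.card_mul_expect s x).symm
    simp only [mul_sub, Finset.card_mul_expect, sub_sq, Finset.sum_add_distrib,
      Finset.sum_sub_distrib, ← Finset.mul_sum, ← Finset.sum_mul, hsum, Finset.sum_const,
      nsmul_eq_mul]
    ring
  have deviation_le {k : ι} (hk : k ∈ s) : (x k - μ) ^ 2 ≤ ∑ k ∈ s, (x k - μ) ^ 2 :=
    Finset.single_le_sum (f := fun k => (x k - μ) ^ 2) (fun _ _ => sq_nonneg _) hk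
  calc (x i - x j) ^ 2
      ≤ 2 * (x i - μ) ^ 2 + 2 * (x j - μ) ^ 2 := by
        linarith [sq_nonneg (x i - μ + (x j - μ))]
    _ ≤ 4 * ∑ k ∈ s, (x k - μ) ^ 2 := by linarith [deviation_le hi, deviation_le hj]
    _ = 4 * s.card * (𝔼 k ∈ s, x k ^ 2 - μ ^ 2) := by rw [← variance_eq, mul_assoc]

variable {α V : Type*} [Fintype α]

/-- The squared `ℓ²`-norm on the state space of the nonbacktracking walk. -/
noncomputable def walkEnergy [Fintype V] (f : α × Bool → V → ℝ) : ℝ :=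
  ∑ a, ∑ v, f a v ^ 2

lemma walkEnergy_nonneg [Fintype V] (f : α × Bool → V → ℝ) : 0 ≤ walkEnergy f :=
  Finset.sum_nonneg fun _ _ => Finset.sum_nonneg fun _ _ => sq_nonneg _

variable [DecidableEq α]

/-- The letters that may follow the letter `a` in a reduced word, written as in
`FreeGroup.IsReduced`: all letters but the inverse of `a`. -/
def nextLetters (a : α × Bool) : Finset (α × Bool) :=
  {b | a.1 = b.1 → a.2 = b.2}

lemma mem_nextLetters {a b : α × Bool} : b ∈ nextLetters a ↔ (a.1 = b.1 → a.2 = b.2) := by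
  simp [nextLetters]

lemma mem_nextLetters_comm {a b : α × Bool} : b ∈ nextLetters a ↔ a ∈ nextLetters b := by
  simp only [mem_nextLetters, eq_comm]

lemma card_nextLetters (a : α × Bool) :
    (nextLetters a).card = 2 * Fintype.card α - 1 := by
  have h : nextLetters a = Finset.univ.erase (a.1, !a.2) := by
    ext ⟨i, s⟩
    obtain ⟨j, t⟩ := a
    cases s <;> cases t <;> simp [mem_nextLetters, eq_comm]
  rw [h, Finset.card_erase_of_mem (Finset.mem_univ _), Finset.card_univ, Fintype.card_prod,
    Fintype.card_bool, mul_comm]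

lemma nextLetters_nonempty (a : α × Bool) : (nextLetters a).Nonempty :=
  ⟨a, mem_nextLetters.2 fun _ => rfl⟩

lemma exists_mem_nextLetters [Nontrivial α] (b b' : α × Bool) :
    ∃ a, b ∈ nextLetters a ∧ b' ∈ nextLetters a := by
  have hcard : (Finset.univ : Finset (α × Bool)).card <
      (nextLetters b).card + (nextLetters b').card := by
    have := Fintype.one_lt_card (α := α)
    rw [card_nextLetters, card_nextLetters, Finset.card_univ, Fintype.card_prod,
      Fintype.card_bool]
    omega
  obtain ⟨a, ha⟩ := Finset.inter_nonempty_of_card_lt_card_add_card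
    (Finset.subset_univ _) (Finset.subset_univ _) hcard
  rw [Finset.mem_inter] at ha
  exact ⟨a, mem_nextLetters_comm.1 ha.1, mem_nextLetters_comm.1 ha.2⟩

lemma sum_expect_nextLetters (g : α × Bool → ℝ) :
    ∑ a, 𝔼 b ∈ nextLetters a, g b = ∑ b, g b := by
  simp only [Finset.expect_eq_sum_div_card, Finset.sum_div]
  rw [Finset.sum_comm' (t' := Finset.univ) (s' := nextLetters)
    fun a b => by simp [mem_nextLetters_comm]]
  refine Finset.sum_congr rfl fun b _ => ?_
  have hcard : ((nextLetters b).card : ℝ) ≠ 0 :=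
    Nat.cast_ne_zero.2 (nextLetters_nonempty b).card_ne_zero
  simp only [card_nextLetters, Finset.sum_const, nsmul_eq_mul] at hcard ⊢
  exact mul_div_cancel₀ _ hcard

variable [MulAction (FreeGroup α) V]

/-- The averaging operator of the nonbacktracking walk on the Schreier graph of the action of a
free group on `V`. A state is a pair `(a, v)`: the next letter to be read is `a`, and reading it
leads to the vertex `v`. -/
noncomputable def walkStep (f : α × Bool → V → ℝ) (a : α × Bool) (v : V) : ℝ :=
  𝔼 b ∈ nextLetters a, f b ((FreeGroup.mk [a])⁻¹ • v)

lemma walkStep_mk_smul (f : α × Bool → V → ℝ) (a : α × Bool) (v : V) :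
    walkStep f a (FreeGroup.mk [a] • v) = 𝔼 b ∈ nextLetters a, f b v := by
  rw [walkStep, inv_smul_smul]

lemma walkStep_const (f : V → ℝ) (a : α × Bool) (v : V) :
    walkStep (fun _ => f) a v = f ((FreeGroup.mk [a])⁻¹ • v) :=
  Finset.expect_const (nextLetters_nonempty a) _

lemma walkEnergy_sub_walkEnergy_walkStep [Fintype V] (f : α × Bool → V → ℝ) :
    walkEnergy f - walkEnergy (walkStep f) =
      ∑ a, ∑ v, (𝔼 b ∈ nextLetters a, f b v ^ 2 - (𝔼 b ∈ nextLetters a, f b v) ^ 2) := by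
  have energy_eq : walkEnergy f = ∑ a, ∑ v, 𝔼 b ∈ nextLetters a, f b v ^ 2 := by
    rw [walkEnergy, Finset.sum_comm]
    simp only [← sum_expect_nextLetters fun b => f b _ ^ 2]
    exact Finset.sum_comm
  have energy_step_eq : walkEnergy (walkStep f) =
      ∑ a, ∑ v, (𝔼 b ∈ nextLetters a, f b v) ^ 2 := by
    refine Finset.sum_congr rfl fun a _ => ?_
    rw [← Equiv.sum_comp (MulAction.toPerm (FreeGroup.mk [a]))]
    simp only [MulAction.toPerm_apply, walkStep_mk_smul]
  simp only [energy_eq, energy_step_eq, Finset.sum_sub_distrib]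

lemma sq_sub_le_walkEnergy_sub [Nontrivial α] [Fintype V] (f : α × Bool → V → ℝ)
    (b b' : α × Bool) (v : V) :
    (f b v - f b' v) ^ 2 ≤
      4 * (2 * Fintype.card α - 1 : ℕ) * (walkEnergy f - walkEnergy (walkStep f)) := by
  let variance (a : α × Bool) (v : V) : ℝ :=
    𝔼 b ∈ nextLetters a, f b v ^ 2 - (𝔼 b ∈ nextLetters a, f b v) ^ 2
  have variance_nonneg (a : α × Bool) (v : V) : 0 ≤ variance a v := by
    have h := Finset.expect_mul_sq_le_sq_mul_sq (nextLetters a) (fun b => f b v) 1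
    simp only [Pi.one_apply, mul_one, one_pow, Finset.expect_const (nextLetters_nonempty a)] at h
    exact sub_nonneg.2 h
  obtain ⟨a, hb, hb'⟩ := exists_mem_nextLetters b b'
  have variance_le : variance a v ≤ ∑ a, ∑ v, variance a v :=
    (Finset.single_le_sum (fun v _ => variance_nonneg a v) (Finset.mem_univ v)).trans
      (Finset.single_le_sum (f := fun a => ∑ v, variance a v)
        (fun a _ => Finset.sum_nonneg fun v _ => variance_nonneg a v) (Finset.mem_univ a))
  rw [walkEnergy_sub_walkEnergy_walkStep, ← card_nextLetters a]
  exact (sq_sub_le_expect_sq_sub_sq_expect _ (fun b => f b v) hb hb').trans (by gcongr)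

lemma tendsto_iterate_walkStep_sub_letter [Nontrivial α] [Finite V] (f : α × Bool → V → ℝ)
    (b b' : α × Bool) (v : V) :
    Tendsto (fun l => walkStep^[l] f b v - walkStep^[l] f b' v) atTop (nhds 0) := by
  have := Fintype.ofFinite V
  let energy (l : ℕ) : ℝ := walkEnergy (walkStep^[l] f)
  let C : ℝ := 4 * (2 * Fintype.card α - 1 : ℕ)
  have hC : 0 < C := by
    have := Fintype.one_lt_card (α := α)
    have : 0 < 2 * Fintype.card α - 1 := by omega
    positivity
  have sq_le (l : ℕ) : (walkStep^[l] f b v - walkStep^[l] f b' v) ^ 2 ≤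
      C * (energy l - energy (l + 1)) := by
    simpa only [energy, Function.iterate_succ_apply'] using
      sq_sub_le_walkEnergy_sub (walkStep^[l] f) b b' v
  have energy_antitone : Antitone energy := antitone_nat_of_succ_le fun l =>
    sub_nonneg.1 (nonneg_of_mul_nonneg_right ((sq_nonneg _).trans (sq_le l)) hC)
  have energy_tendsto := tendsto_atTop_ciInf energy_antitone
    ⟨0, Set.forall_mem_range.2 fun l => walkEnergy_nonneg (walkStep^[l] f)⟩
  have energy_sub_tendsto : Tendsto (fun l => C * (energy l - energy (l + 1))) atTop (nhds 0) := by
    simpa using (energy_tendsto.sub (energy_tendsto.comp (tendsto_add_atTop_nat 1))).const_mul C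
  have sq_tendsto := squeeze_zero (fun l => sq_nonneg _) sq_le energy_sub_tendsto
  rw [tendsto_zero_iff_abs_tendsto_zero]
  simpa only [Function.comp_def, Real.sqrt_sq_eq_abs, Real.sqrt_zero] using sq_tendsto.sqrt

lemma tendsto_iterate_walkStep_succ_sub [Nontrivial α] [Finite V] (f : α × Bool → V → ℝ)
    (a b : α × Bool) (v : V) :
    Tendsto (fun l => walkStep^[l + 1] f a (FreeGroup.mk [a] • v) - walkStep^[l] f b v)
      atTop (nhds 0) := by
  have h : Tendsto (fun l => (∑ c ∈ nextLetters a,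
      (walkStep^[l] f c v - walkStep^[l] f b v)) / (nextLetters a).card) atTop (nhds 0) := by
    simpa using (tendsto_finsetSum (nextLetters a) fun c _ =>
      tendsto_iterate_walkStep_sub_letter f c b v).div_const ((nextLetters a).card : ℝ)
  refine h.congr fun l => ?_
  rw [← Finset.expect_eq_sum_div_card, Finset.expect_sub_distrib,
    Finset.expect_const (nextLetters_nonempty a), Function.iterate_succ_apply', walkStep_mk_smul]

lemma tendsto_iterate_walkStep_add_length_sub [Nontrivial α] [Finite V] (f : α × Bool → V → ℝ)
    (w : List (α × Bool)) (a b : α × Bool) (v : V) :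
    Tendsto (fun l => walkStep^[l + w.length] f a (FreeGroup.mk w • v) - walkStep^[l] f b v)
      atTop (nhds 0) := by
  induction w generalizing a with
  | nil =>
    rw [← FreeGroup.one_eq_mk]
    simpa using tendsto_iterate_walkStep_sub_letter f a b v
  | cons c w ih =>
    have hw : FreeGroup.mk (c :: w) • v = FreeGroup.mk [c] • FreeGroup.mk w • v := by
      rw [smul_smul, FreeGroup.mul_mk, List.singleton_append]
    have change_letter := (tendsto_iterate_walkStep_sub_letter f a c
      (FreeGroup.mk (c :: w) • v)).comp (tendsto_add_atTop_nat (w.length + 1))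
    have read_letter := (tendsto_iterate_walkStep_succ_sub f c b (FreeGroup.mk w • v)).comp
      (tendsto_add_atTop_nat w.length)
    have total := (change_letter.add read_letter).add (ih b)
    rw [add_zero, add_zero] at total
    refine total.congr fun l => ?_
    simp only [Function.comp_apply, hw, List.length_cons, add_assoc]
    ring

-- The words of `g` and `g⁻¹` have the same length, so the walk reaches `g² • v = g • (g • v)` and
-- `v = g⁻¹ • (g • v)` from `g • v` with the same number of extra steps.
lemma tendsto_iterate_walkStep_sq_smul_sub [Nontrivial α] [Finite V] (f : α × Bool → V → ℝ)
    (g : FreeGroup α) (a : α × Bool) (v : V) :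
    Tendsto (fun l => walkStep^[l] f a (g ^ 2 • v) - walkStep^[l] f a v) atTop (nhds 0) := by
  obtain ⟨w, rfl⟩ : ∃ w, FreeGroup.mk w = g := ⟨g.toWord, FreeGroup.mk_toWord⟩
  have forward := tendsto_iterate_walkStep_add_length_sub f w a a (FreeGroup.mk w • v)
  have backward := tendsto_iterate_walkStep_add_length_sub f (FreeGroup.invRev w) a a
    (FreeGroup.mk w • v)
  rw [← FreeGroup.inv_mk, inv_smul_smul, FreeGroup.invRev_length] at backward
  rw [← tendsto_add_atTop_iff_nat w.length]
  simpa only [sub_sub_sub_cancel_right, sub_zero, smul_smul, ← sq] using forward.sub backward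

lemma card_list_length_succ {β : Type*} [Fintype β] (l : ℕ) (P : List β → Prop) :
    Nat.card {w : List β // w.length = l + 1 ∧ P w} =
      ∑ b, Nat.card {w : List β // w.length = l ∧ P (b :: w)} := by
  let e : {w : List β // w.length = l + 1 ∧ P w} ≃
      Σ b, {w : List β // w.length = l ∧ P (b :: w)} :=
    { toFun
        | ⟨[], h⟩ => absurd h.1 (by simp)
        | ⟨b :: w, h⟩ => ⟨b, w, by simpa using h.1, h.2⟩
      invFun := fun ⟨b, w, h⟩ => ⟨b :: w, by simpa using h.1, h.2⟩
      left_inv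
        | ⟨[], h⟩ => absurd h.1 (by simp)
        | ⟨b :: w, h⟩ => rfl
      right_inv := fun _ => rfl }
  have (b : β) : Finite {w : List β // w.length = l ∧ P (b :: w)} :=
    ((List.finite_length_eq β l).subset fun _ hw => hw.1).to_subtype
  rw [Nat.card_congr e, Nat.card_sigma]

lemma card_isReduced_cons (S : Set V) (l : ℕ) (a : α × Bool) (v : V) :
    (Nat.card {w : List (α × Bool) // w.length = l ∧ FreeGroup.IsReduced (a :: w) ∧
        (FreeGroup.mk (a :: w))⁻¹ • v ∈ S} : ℝ) =
      (2 * Fintype.card α - 1 : ℕ) ^ l * walkStep^[l + 1] (fun _ => S.indicator 1) a v := by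
  induction l generalizing a v with
  | zero =>
    rw [pow_zero, one_mul, zero_add, Function.iterate_one, walkStep_const]
    by_cases h : (FreeGroup.mk [a])⁻¹ • v ∈ S
    · rw [Set.indicator_of_mem h, Pi.one_apply, Nat.cast_eq_one, Nat.card_eq_one_iff_unique]
      exact ⟨⟨fun w w' => Subtype.ext
        ((List.length_eq_zero_iff.1 w.2.1).trans (List.length_eq_zero_iff.1 w'.2.1).symm)⟩,
        ⟨[], rfl, .singleton, h⟩⟩
    · rw [Set.indicator_of_notMem h, Nat.cast_eq_zero]
      have : IsEmpty {w : List (α × Bool) // w.length = 0 ∧ FreeGroup.IsReduced (a :: w) ∧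
          (FreeGroup.mk (a :: w))⁻¹ • v ∈ S} :=
        ⟨fun ⟨w, hw, _, hv⟩ => h (by rwa [List.length_eq_zero_iff.1 hw] at hv)⟩
      exact Nat.card_of_isEmpty
  | succ l ih =>
    have card_next (b : α × Bool) : (Nat.card {w : List (α × Bool) // w.length = l ∧
        FreeGroup.IsReduced (a :: b :: w) ∧ (FreeGroup.mk (a :: b :: w))⁻¹ • v ∈ S} : ℝ) =
        if b ∈ nextLetters a then (2 * Fintype.card α - 1 : ℕ) ^ l *
          walkStep^[l + 1] (fun _ => S.indicator 1) b ((FreeGroup.mk [a])⁻¹ • v) else 0 := by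
      have hmk (w : List (α × Bool)) : (FreeGroup.mk (b :: w))⁻¹ • (FreeGroup.mk [a])⁻¹ • v =
          (FreeGroup.mk (a :: b :: w))⁻¹ • v := by
        rw [smul_smul, ← mul_inv_rev, FreeGroup.mul_mk, List.singleton_append]
      split_ifs with hb
      · have hcons (w : List (α × Bool)) :
            FreeGroup.IsReduced (a :: b :: w) ↔ FreeGroup.IsReduced (b :: w) :=
          FreeGroup.isReduced_cons_cons.trans (and_iff_right (mem_nextLetters.1 hb))
        simp only [← ih, hcons, hmk]
      · simp [FreeGroup.isReduced_cons_cons, mt mem_nextLetters.2 hb]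
    rw [card_list_length_succ, Nat.cast_sum, Finset.sum_congr rfl fun b _ => card_next b,
      Finset.sum_ite_mem, Finset.univ_inter, ← Finset.mul_sum, ← Finset.card_mul_expect,
      card_nextLetters, Function.iterate_succ_apply' _ (l + 1), walkStep, pow_succ, mul_assoc]

end NonbacktrackingWalk

section RandomWord

variable {n : ℕ}

instance finite_reducedWord (n l : ℕ) : Finite (ReducedWord n l) :=
  ((List.finite_length_eq (Fin n × Bool) l).subset fun _ hw => hw.2).to_subtype

open scoped BigOperators

variable {V : Type*} [MulAction (FreeGroup (Fin n)) V]

lemma card_reducedWord_inv_smul_mem [Nonempty (Fin n)] (S : Set V) (l : ℕ) (v : V) :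
    (Nat.card {w : ReducedWord n (l + 1) // (FreeGroup.mk w.1)⁻¹ • v ∈ S} : ℝ) =
      (2 * n - 1 : ℕ) ^ l * (2 * n) *
        𝔼 a : Fin n × Bool, walkStep^[l + 1] (fun _ => S.indicator 1) a v := by
  have e : {w : ReducedWord n (l + 1) // (FreeGroup.mk w.1)⁻¹ • v ∈ S} ≃
      {w : List (Fin n × Bool) // w.length = l + 1 ∧ FreeGroup.IsReduced w ∧
        (FreeGroup.mk w)⁻¹ • v ∈ S} :=
    (Equiv.subtypeSubtypeEquivSubtypeInter _ fun w => (FreeGroup.mk w)⁻¹ • v ∈ S).trans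
      (Equiv.subtypeEquivRight fun w => by
        rw [← FreeGroup.isReduced_iff_reduce_eq, and_comm (a := FreeGroup.IsReduced w), and_assoc])
  rw [Nat.card_congr e, card_list_length_succ, Nat.cast_sum]
  simp only [card_isReduced_cons, Fintype.card_fin]
  rw [← Finset.mul_sum, ← Fintype.card_mul_expect, Fintype.card_prod, Fintype.card_fin,
    Fintype.card_bool, Nat.cast_mul, Nat.cast_ofNat]
  ring

lemma card_reducedWord_succ [Nonempty (Fin n)] (l : ℕ) :
    (Nat.card (ReducedWord n (l + 1)) : ℝ) = (2 * n - 1 : ℕ) ^ l * (2 * n) := by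
  have h := card_reducedWord_inv_smul_mem (n := n) Set.univ l (1 : FreeGroup (Fin n))
  have step_one : walkStep (fun _ => 1 : Fin n × Bool → FreeGroup (Fin n) → ℝ) = fun _ => 1 := by
    ext a v
    exact walkStep_const 1 a v
  rw [Nat.card_congr (Equiv.subtypeUnivEquiv fun _ => Set.mem_univ _), Set.indicator_univ,
    Function.iterate_fixed step_one] at h
  simpa using h

/-- The probability that a uniformly random reduced word of length `l` represents an element of
the set `S`. -/
noncomputable def memProb (n l : ℕ) (S : Set (FreeGroup (Fin n))) : ℝ :=
  Nat.card {w : ReducedWord n l // FreeGroup.mk w.1 ∈ S} / Nat.card (ReducedWord n l)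

lemma memProb_nonneg (l : ℕ) (S : Set (FreeGroup (Fin n))) : 0 ≤ memProb n l S := by
  unfold memProb
  positivity

lemma sum_memProb_le_one {ι : Type*} [Fintype ι] {S : ι → Set (FreeGroup (Fin n))}
    (hS : Pairwise (Function.onFun Disjoint S)) (l : ℕ) : ∑ i, memProb n l (S i) ≤ 1 := by
  simp only [memProb, ← Finset.sum_div]
  refine div_le_one_of_le₀ ?_ (Nat.cast_nonneg _)
  rw [← Nat.cast_sum, Nat.cast_le, ← Nat.card_sigma]
  refine Nat.card_le_card_of_injective
    (fun x : Σ i, {w : ReducedWord n l // FreeGroup.mk w.1 ∈ S i} => x.2.1) ?_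
  rintro ⟨i, w, hw⟩ ⟨j, w', hw'⟩ (rfl : w = w')
  obtain rfl : i = j := hS.eq (Set.not_disjoint_iff.2 ⟨_, hw, hw'⟩)
  rfl

lemma memProb_le_one (l : ℕ) (S : Set (FreeGroup (Fin n))) : memProb n l S ≤ 1 :=
  div_le_one_of_le₀ (by exact_mod_cast Finite.card_subtype_le _) (Nat.cast_nonneg _)

lemma memProb_inv_smul_mem [Nonempty (Fin n)] (S : Set V) (l : ℕ) (v : V) :
    memProb n (l + 1) {g | g⁻¹ • v ∈ S} =
      𝔼 a : Fin n × Bool, walkStep^[l + 1] (fun _ => S.indicator 1) a v := by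
  have hn : 0 < n := Fin.pos_iff_nonempty.2 ‹_›
  have hcard : (Nat.card (ReducedWord n (l + 1)) : ℝ) ≠ 0 := by
    have : 0 < 2 * n - 1 := by omega
    rw [card_reducedWord_succ]
    positivity
  rw [memProb, div_eq_iff hcard, card_reducedWord_succ, mul_comm]
  exact card_reducedWord_inv_smul_mem S l v

lemma tendsto_memProb_sq_smul_sub [Nontrivial (Fin n)] [Finite V] (S : Set V)
    (g : FreeGroup (Fin n)) (v : V) :
    Tendsto (fun l => memProb n l {x | x⁻¹ • g ^ 2 • v ∈ S} - memProb n l {x | x⁻¹ • v ∈ S})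
      atTop (nhds 0) := by
  rw [← tendsto_add_atTop_iff_nat 1]
  simp only [memProb_inv_smul_mem, Fintype.expect_eq_sum_div_card, ← sub_div,
    ← Finset.sum_sub_distrib]
  have tendsto_sum := tendsto_finsetSum Finset.univ fun a _ =>
    (tendsto_iterate_walkStep_sq_smul_sub (fun _ => S.indicator 1) g a v).comp
      (tendsto_add_atTop_nat 1)
  simpa only [Function.comp_def, Finset.sum_const_zero, zero_div] using
    tendsto_sum.div_const (Fintype.card (Fin n × Bool) : ℝ)

lemma tendsto_memProb_sq_coset_sub [Nontrivial (Fin n)] (K : Subgroup (FreeGroup (Fin n)))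
    [K.FiniteIndex] (g : FreeGroup (Fin n)) :
    Tendsto (fun l =>
      memProb n l {x | (x : FreeGroup (Fin n) ⧸ K) = (g ^ 2 : FreeGroup (Fin n))} - memProb n l K)
      atTop (nhds 0) := by
  have inv_smul_mem_iff (h x : FreeGroup (Fin n)) :
      x⁻¹ • h • ((1 : FreeGroup (Fin n)) : FreeGroup (Fin n) ⧸ K) ∈
        ({((1 : FreeGroup (Fin n)) : FreeGroup (Fin n) ⧸ K)} : Set (FreeGroup (Fin n) ⧸ K)) ↔
      (x : FreeGroup (Fin n) ⧸ K) = h := by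
    rw [Set.mem_singleton_iff, inv_smul_eq_iff, MulAction.Quotient.smul_coe,
      MulAction.Quotient.smul_coe, smul_eq_mul, smul_eq_mul, mul_one, mul_one, eq_comm]
  have coset_one : {x : FreeGroup (Fin n) | (x : FreeGroup (Fin n) ⧸ K) =
      (1 : FreeGroup (Fin n))} = (K : Set (FreeGroup (Fin n))) := by
    ext x
    simp [QuotientGroup.eq]
  have h := tendsto_memProb_sq_smul_sub
    {((1 : FreeGroup (Fin n)) : FreeGroup (Fin n) ⧸ K)} g (1 : FreeGroup (Fin n))
  have h_one (x : FreeGroup (Fin n)) := inv_smul_mem_iff 1 x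
  simp only [one_smul] at h_one
  simpa only [inv_smul_mem_iff, h_one, coset_one] using h

lemma eventually_memProb_lt [Nontrivial (Fin n)] (K : Subgroup (FreeGroup (Fin n)))
    [K.FiniteIndex] {ι : Type*} [Fintype ι] {g : ι → FreeGroup (Fin n)}
    (hg : Function.Injective fun i => ((g i ^ 2 : FreeGroup (Fin n)) : FreeGroup (Fin n) ⧸ K))
    {c : ℝ} (hc : 1 < Fintype.card ι * c) :
    ∀ᶠ l in atTop, memProb n l K < c := by
  let coset (i : ι) : Set (FreeGroup (Fin n)) :=
    {x | (x : FreeGroup (Fin n) ⧸ K) = (g i ^ 2 : FreeGroup (Fin n))}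
  have disjoint_coset : Pairwise (Function.onFun Disjoint coset) := fun i j hij =>
    Set.disjoint_left.2 fun x (hi : _ = _) (hj : _ = _) => hij (hg (hi.symm.trans hj))
  have tendsto_sum : Tendsto (fun l => ∑ i, (memProb n l (coset i) - memProb n l K))
      atTop (nhds 0) := by
    simpa using tendsto_finsetSum Finset.univ fun i _ => tendsto_memProb_sq_coset_sub K (g i)
  filter_upwards [tendsto_sum.eventually (lt_mem_nhds (sub_neg.2 hc))] with l hl
  rw [Finset.sum_sub_distrib, Finset.sum_const, Finset.card_univ, nsmul_eq_mul] at hl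
  have hmul : Fintype.card ι * memProb n l K < Fintype.card ι * c := by
    linarith [sum_memProb_le_one disjoint_coset l]
  exact lt_of_mul_lt_mul_left hmul (Nat.cast_nonneg _)

end RandomWord

section FiniteQuotients

variable {G : Type*} [Group G]

variable (G) in
lemma exists_restrict_monoidHom_injective [Group.FG G] (A : Type*) [Monoid A] :
    ∃ S : Finset G, S.card = Group.rank G ∧
      Function.Injective fun (φ : G →* A) (s : S) => φ s := by
  obtain ⟨S, hcard, hS⟩ := Group.rank_spec G
  exact ⟨S, hcard, fun φ ψ h => MonoidHom.eq_of_eqOn_dense hS fun s hs => congrFun h ⟨s, hs⟩⟩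

lemma finite_monoidHom [Group.FG G] (A : Type*) [Monoid A] [Finite A] : Finite (G →* A) := by
  obtain ⟨S, -, hS⟩ := exists_restrict_monoidHom_injective G A
  exact .of_injective _ hS

lemma card_monoidHom_le [Group.FG G] (A : Type*) [Monoid A] [Finite A] :
    Nat.card (G →* A) ≤ Nat.card A ^ Group.rank G := by
  obtain ⟨S, hcard, hS⟩ := exists_restrict_monoidHom_injective G A
  simpa [Nat.card_fun, hcard] using Nat.card_le_card_of_injective _ hS

lemma exists_comap_stabilizer_eq (H : Subgroup G) [H.FiniteIndex] :
    ∃ (φ : G →* Equiv.Perm (Fin H.index)) (i : Fin H.index),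
      (MulAction.stabilizer (Equiv.Perm (Fin H.index)) i).comap φ = H := by
  let e : G ⧸ H ≃ Fin H.index := Finite.equivFin _
  refine ⟨e.permCongrHom.toMonoidHom.comp (MulAction.toPermHom G (G ⧸ H)), e (1 : G), ?_⟩
  ext g
  have coset_eq_iff : (g : G ⧸ H) = (1 : G) ↔ g ∈ H := by simp [QuotientGroup.eq]
  simpa [MulAction.mem_stabilizer_iff, Subgroup.mem_comap, Equiv.permCongrHom] using coset_eq_iff

lemma finite_setOf_index_le [Group.FG G] (M : ℕ) :
    {H : Subgroup G | 0 < H.index ∧ H.index ≤ M}.Finite := by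
  have (k : ℕ) : Finite (G →* Equiv.Perm (Fin k)) := finite_monoidHom _
  refine (Set.finite_iUnion fun k : Fin (M + 1) => Set.finite_range
    fun x : (G →* Equiv.Perm (Fin k)) × Fin k =>
      (MulAction.stabilizer (Equiv.Perm (Fin k)) x.2).comap x.1).subset ?_
  rintro H ⟨hpos, hle⟩
  have : H.FiniteIndex := ⟨hpos.ne'⟩
  obtain ⟨φ, i, h⟩ := exists_comap_stabilizer_eq H
  exact Set.mem_iUnion.2 ⟨⟨H.index, Nat.lt_succ_of_le hle⟩, (φ, i), h⟩

lemma rank_freeGroup_le (α : Type*) [Fintype α] :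
    Group.rank (FreeGroup α) ≤ Fintype.card α := by
  classical
  have hS : Subgroup.closure ((Finset.univ.image FreeGroup.of : Finset (FreeGroup α)) :
      Set (FreeGroup α)) = ⊤ := by
    simp [FreeGroup.closure_range_of]
  exact (Group.rank_le hS).trans Finset.card_image_le

lemma rank_subgroup_freeGroup_le {α : Type*} [Fintype α] (H : Subgroup (FreeGroup α))
    [H.FiniteIndex] : Group.rank H ≤ H.index * Fintype.card α :=
  H.rank_le_index_mul_rank.trans (Nat.mul_le_mul_left _ (rank_freeGroup_le α))

lemma exists_surjective_comap_ker_le {Q A : Type*} [Group Q] [Group A] {π : G →* Q}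
    (hπ : Function.Surjective π) {H : Subgroup Q} {φ : H →* A} (hφ : Function.Surjective φ) :
    ∃ ψ : H.comap π →* A, Function.Surjective ψ ∧ π.ker ≤ ψ.ker.map (H.comap π).subtype := by
  refine ⟨φ.comp (π.subgroupComap H),
    hφ.comp (π.subgroupComap_surjective_of_surjective H hπ), fun g hg => ?_⟩
  have hgH : g ∈ H.comap π := Subgroup.mem_comap.2 ((MonoidHom.mem_ker.1 hg) ▸ H.one_mem)
  have hg_one : π.subgroupComap H ⟨g, hgH⟩ = 1 := Subtype.ext hg
  exact Subgroup.mem_map.2 ⟨⟨g, hgH⟩, by simp [MonoidHom.mem_ker, hg_one], rfl⟩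

end FiniteQuotients

section RandomTuple

variable {n : ℕ}

lemma wordProb_nonneg (l k : ℕ) (P : (Fin k → FreeGroup (Fin n)) → Prop) :
    0 ≤ wordProb n l k P := by
  unfold wordProb
  positivity

lemma wordProb_le_sum {ι : Type*} [Fintype ι] (l : ℕ) {k : ℕ}
    {P : (Fin k → FreeGroup (Fin n)) → Prop} {Q : ι → (Fin k → FreeGroup (Fin n)) → Prop}
    (h : ∀ R, P R → ∃ i, Q i R) :
    wordProb n l k P ≤ ∑ i, wordProb n l k (Q i) := by
  choose f hf using h
  let choose_index (R : {R : Fin k → ReducedWord n l // P fun j => FreeGroup.mk (R j).1}) :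
      Σ i, {R : Fin k → ReducedWord n l // Q i fun j => FreeGroup.mk (R j).1} :=
    ⟨f _ R.2, R.1, hf _ R.2⟩
  have choose_index_injective : Function.Injective choose_index := fun R R' hRR =>
    Subtype.ext (congrArg (fun x => x.2.1) hRR)
  simp only [wordProb, ← Finset.sum_div, ← Nat.cast_sum, ← Nat.card_sigma]
  gcongr
  exact Nat.card_le_card_of_injective choose_index choose_index_injective

lemma wordProb_mono (l : ℕ) {k : ℕ} {P Q : (Fin k → FreeGroup (Fin n)) → Prop}
    (h : ∀ R, P R → Q R) : wordProb n l k P ≤ wordProb n l k Q := by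
  simpa using wordProb_le_sum (Q := fun _ : Unit => Q) l fun R hR => ⟨(), h R hR⟩

lemma wordProb_forall_mem (l k : ℕ) (S : Set (FreeGroup (Fin n))) :
    wordProb n l k (fun R => ∀ j, R j ∈ S) = memProb n l S ^ k := by
  rw [wordProb, memProb, div_pow, Nat.card_congr (Equiv.subtypePiEquivPi
    (p := fun (_ : Fin k) (w : ReducedWord n l) => FreeGroup.mk w.1 ∈ S)), Nat.card_fun,
    Nat.card_fin, Nat.cast_pow]

variable [Nontrivial (Fin n)] {H : Subgroup (FreeGroup (Fin n))} [H.FiniteIndex]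

lemma eventually_memProb_ker_lt {A : Type*} [Group A] [Finite A] (hA : Odd (Nat.card A))
    {φ : H →* A} (hφ : Function.Surjective φ) {c : ℝ} (hc : 1 < Nat.card A * c) :
    ∀ᶠ l in atTop, memProb n l (φ.ker.map H.subtype) < c := by
  have := Fintype.ofFinite A
  have : (φ.ker.map H.subtype).FiniteIndex :=
    ⟨by
      rw [Subgroup.index_map_subtype]
      exact mul_ne_zero Subgroup.FiniteIndex.index_ne_zero Subgroup.FiniteIndex.index_ne_zero⟩
  obtain ⟨lift, hlift⟩ := hφ.hasRightInverse
  have sq_injective : Function.Injective fun a : A => a ^ 2 :=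
    (Nat.Coprime.pow_left_bijective (Nat.coprime_two_right.2 hA)).injective
  refine eventually_memProb_lt _ (g := fun a => (lift a : FreeGroup (Fin n)))
    (fun a b hab => sq_injective ?_) (by rwa [← Nat.card_eq_fintype_card])
  obtain ⟨y, hy, hy_eq⟩ := Subgroup.mem_map.1 (QuotientGroup.eq.1 hab)
  obtain rfl : y = (lift a ^ 2)⁻¹ * lift b ^ 2 := Subtype.ext (by simpa using hy_eq)
  rwa [MonoidHom.mem_ker, map_mul, map_inv, inv_mul_eq_one, map_pow, map_pow, hlift, hlift] at hy

lemma eventually_wordProb_exists_surjective_le {A : Type*} [Group A] [Finite A]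
    (hA : Odd (Nat.card A)) {ρ : ℕ → ℕ} (hρ : ∀ l, Group.rank H < ρ l) :
    ∀ᶠ l in atTop, wordProb n l (ρ l) (fun R => ∃ φ : H →* A, Function.Surjective φ ∧
      ∀ j, R j ∈ φ.ker.map H.subtype) ≤ 2 ^ (Group.rank H + 1) / Nat.card A := by
  have : Finite (H →* A) := finite_monoidHom A
  have := Fintype.ofFinite {φ : H →* A // Function.Surjective φ}
  have hm : (0 : ℝ) < Nat.card A := by exact_mod_cast Nat.card_pos
  have hc : 1 < Nat.card A * (2 / Nat.card A : ℝ) := by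
    rw [mul_div_cancel₀ _ hm.ne']
    exact one_lt_two
  filter_upwards [eventually_all.2 fun φ : {φ : H →* A // Function.Surjective φ} =>
    eventually_memProb_ker_lt hA φ.2 hc] with l hl
  set r := Group.rank H
  have prob_le (φ : {φ : H →* A // Function.Surjective φ}) :
      wordProb n l (ρ l) (fun R => ∀ j, R j ∈ φ.1.ker.map H.subtype) ≤
        (2 / Nat.card A : ℝ) ^ (r + 1) :=
    calc _ = memProb n l (φ.1.ker.map H.subtype) ^ ρ l := wordProb_forall_mem l _ _
      _ ≤ memProb n l (φ.1.ker.map H.subtype) ^ (r + 1) :=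
        pow_le_pow_of_le_one (memProb_nonneg l _) (memProb_le_one l _) (hρ l)
      _ ≤ _ := pow_le_pow_left₀ (memProb_nonneg l _) (hl φ).le _
  have card_le : Nat.card {φ : H →* A // Function.Surjective φ} ≤ Nat.card A ^ r :=
    (Finite.card_subtype_le _).trans (card_monoidHom_le A)
  calc wordProb n l (ρ l) _
      ≤ ∑ φ : {φ : H →* A // Function.Surjective φ},
          wordProb n l (ρ l) (fun R => ∀ j, R j ∈ φ.1.ker.map H.subtype) :=
        wordProb_le_sum l fun R ⟨φ, hφ, hR⟩ => ⟨⟨φ, hφ⟩, hR⟩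
    _ ≤ Nat.card {φ : H →* A // Function.Surjective φ} * (2 / Nat.card A : ℝ) ^ (r + 1) := by
        rw [Nat.card_eq_fintype_card, ← nsmul_eq_mul]
        exact Finset.sum_le_card_nsmul _ _ _ fun φ _ => prob_le φ
    _ ≤ (Nat.card A ^ r : ℕ) * (2 / Nat.card A : ℝ) ^ (r + 1) := by gcongr
    _ = 2 ^ (r + 1) / Nat.card A := by
        rw [Nat.cast_pow, div_pow, pow_succ (Nat.card A : ℝ)]
        field_simp

lemma tendsto_wordProb_exists_surjective_int {ρ : ℕ → ℕ} (hρ : ∀ l, Group.rank H < ρ l) :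
    Tendsto (fun l => wordProb n l (ρ l) fun R =>
      ∃ φ : H →* Multiplicative ℤ, Function.Surjective φ ∧ ∀ j, R j ∈ φ.ker.map H.subtype)
      atTop (nhds 0) := by
  refine tendsto_order.2 ⟨fun a ha => .of_forall fun l => ha.trans_le (wordProb_nonneg l _ _),
    fun ε hε => ?_⟩
  obtain ⟨s, hs⟩ := exists_nat_gt (2 ^ (Group.rank H + 1) / ε)
  let A := Multiplicative (ZMod (2 * s + 1))
  have card_A : Nat.card A = 2 * s + 1 :=
    (Nat.card_congr Multiplicative.toAdd).trans (Nat.card_zmod _)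
  have bound_lt : 2 ^ (Group.rank H + 1) / (Nat.card A : ℝ) < ε := by
    rw [card_A, div_lt_comm₀ (by positivity) hε]
    refine hs.trans_le ?_
    exact_mod_cast (by omega : s ≤ 2 * s + 1)
  let reduce : Multiplicative ℤ →* A := (Int.castAddHom (ZMod (2 * s + 1))).toMultiplicative
  have reduce_surjective : Function.Surjective reduce := ZMod.intCast_surjective
  filter_upwards [eventually_wordProb_exists_surjective_le (A := A) (card_A ▸ ⟨s, rfl⟩) hρ]
    with l hl
  refine (wordProb_mono l fun R ⟨φ, hφ, hR⟩ => ?_).trans_lt (hl.trans_lt bound_lt)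
  have ker_le : φ.ker ≤ (reduce.comp φ).ker := φ.ker_le_comap reduce.ker
  exact ⟨reduce.comp φ, reduce_surjective.comp hφ, fun j => Subgroup.map_mono ker_le (hR j)⟩

end RandomTuple

/-- For every `M` there is a constant `c'(M)` such that the probability that the random group
`⟨x_1, …, x_n ∣ R⟩` (with `ρ(l) ≥ c'(M)` relators, chosen uniformly and independently among
reduced words of length `l`) has a subgroup of index at most `M` surjecting onto `ℤ`
tends to `0` as `l → ∞`. -/
theorem random_group_no_finite_index_subgroup_surjecting_onto_Z
    (n : ℕ) (hn : 2 ≤ n) (M : ℕ) :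
    ∃ c' : ℕ,
      ∀ ρ : ℕ → ℕ, (∀ l, c' ≤ ρ l) →
        Tendsto (fun l => wordProb n l (ρ l) fun R =>
            ∃ H : Subgroup (FreeGroup (Fin n) ⧸ Subgroup.normalClosure (Set.range R)),
              0 < H.index ∧ H.index ≤ M ∧
              ∃ φ : H →* Multiplicative ℤ, Function.Surjective φ)
          atTop (nhds 0) := by
  refine ⟨M * n + 1, fun ρ hρ => ?_⟩
  have := Fin.nontrivial_iff_two_le.2 hn
  let LowIndex := {H : Subgroup (FreeGroup (Fin n)) // 0 < H.index ∧ H.index ≤ M}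
  have : Finite LowIndex := (finite_setOf_index_le M).to_subtype
  have := Fintype.ofFinite LowIndex
  have (H : LowIndex) : H.1.FiniteIndex := ⟨H.2.1.ne'⟩
  have rank_lt (H : LowIndex) (l : ℕ) : Group.rank H.1 < ρ l :=
    calc Group.rank H.1 ≤ H.1.index * n := by simpa using rank_subgroup_freeGroup_le H.1
      _ ≤ M * n := Nat.mul_le_mul_right n H.2.2
      _ < ρ l := hρ l
  have tendsto_sum := tendsto_finsetSum Finset.univ fun (H : LowIndex) _ =>
    tendsto_wordProb_exists_surjective_int (rank_lt H)
  rw [Finset.sum_const_zero] at tendsto_sum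
  refine squeeze_zero (fun l => wordProb_nonneg l _ _) (fun l => ?_) tendsto_sum
  refine wordProb_le_sum l fun R ⟨H, hpos, hle, φ, hφ⟩ => ?_
  let π := QuotientGroup.mk' (Subgroup.normalClosure (Set.range R))
  have hπ : Function.Surjective π := QuotientGroup.mk'_surjective _
  obtain ⟨ψ, hψ, hker⟩ := exists_surjective_comap_ker_le hπ hφ
  have relator_mem (j : Fin (ρ l)) : R j ∈ π.ker :=
    (QuotientGroup.ker_mk' _).ge (Subgroup.subset_normalClosure (Set.mem_range_self j))
  rw [← H.index_comap_of_surjective hπ] at hpos hle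
  exact ⟨⟨H.comap π, hpos, hle⟩, ψ, hψ, fun j => hker (relator_mem j)⟩
end

section
/- Let G be a finite group and X → G a function whose image generates G, and suppose H ≤ G is a subgroup of index 2 with x_i ∉ H for all i ∈ {1,…,n}. Then every reduced word of even length evaluates in G to an element of H and every reduced word of odd length evaluates to an element of G ∖ H; moreover, for every g ∈ H the proportion |{w ∈ S_{2l} : w =_G g}| / |S_{2l}| converges to 2/|G| as l → ∞, and for every g ∈ G ∖ H the proportion |{w ∈ S_{2l+1} : w =_G g}| / |S_{2l+1}| converges to 2/|G| as l → ∞. -/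
open Filter

/-- Words in the alphabet `X ∪ X⁻¹` with `X = {x_1, …, x_n}` are lists of letters `(i, b)`,
the letter being `x_i` if `b = true` and `x_i⁻¹` if `b = false`.  `evalWord φ w` is the image
of the word `w` in `G` under the homomorphism `F(X) → G` induced by `φ : X → G`. -/
def evalWord {n : ℕ} {G : Type*} [Group G] (φ : Fin n → G) (w : List (Fin n × Bool)) : G :=
  FreeGroup.lift φ (FreeGroup.mk w)


/-!
Let `F` act by linear isometries on an inner product space, let `σ l` be the average of the
translates of a vector `v` by the reduced words of length `l`, and let `A` be the sum of the
operators of the `q + 1` letters.  Splitting off the first letter gives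
`A (σ (l + 1)) = q σ (l + 2) + σ l`.  As `A` is symmetric of norm at most `q + 1`, the quantity
`(q + 1) (‖σ (l + 1)‖² + ‖σ l‖²) - 2 ⟪A (σ (l + 1)), σ l⟫` is nonnegative, and it drops by
`(q - 1) ‖σ (l + 2) - σ l‖²` when `l` grows by one; since `q > 1`, `σ (l + 2) - σ l` tends to `0`.
By the recurrence, `h l = σ l + σ (l + 1)` then satisfies `(q + 1) h l - A (h l) → 0`, whose inner
product with `h l` is half of the sum of `‖a h l - h l‖²` over the letters `a`; so `h l` is
asymptotically invariant.  When the action factors through a finite group `G`, averaging over `G`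
identifies the limit of `h l` as twice the `G`-average of `v`.  In the regular representation this
says that the proportions of words of lengths `l` and `l + 1` evaluating to `g` add up to `2 / |G|`
in the limit, and parity makes one of the two vanish.
-/

open scoped Topology RealInnerProductSpace Finset

section ReducedWords

variable {α : Type*}

/-- The formal inverse of a letter, as an involution of the alphabet `X ∪ X⁻¹`. -/
def invLetter : Equiv.Perm (α × Bool) :=
  (Equiv.refl α).prodCongr Equiv.boolNot

theorem isReduced_cons_cons_iff_ne_invLetter {a b : α × Bool} {w : List (α × Bool)} :
    FreeGroup.IsReduced (a :: b :: w) ↔ a ≠ invLetter b ∧ FreeGroup.IsReduced (b :: w) := by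
  rw [FreeGroup.isReduced_cons_cons]
  refine and_congr_left fun _ => ?_
  obtain ⟨i, s⟩ := a
  obtain ⟨j, t⟩ := b
  cases s <;> cases t <;> simp [invLetter]

theorem mk_invLetter (a : α × Bool) : FreeGroup.mk [invLetter a] = (FreeGroup.mk [a])⁻¹ :=
  rfl

theorem mk_invLetter_cons_cons (a : α × Bool) (w : List (α × Bool)) :
    FreeGroup.mk (invLetter a :: a :: w) = FreeGroup.mk w :=
  inv_mul_cancel_left (FreeGroup.mk [a]) (FreeGroup.mk w)

variable (α) in
/-- The finite set of reduced words of length `l`. -/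
noncomputable def reducedWords [Finite α] (l : ℕ) : Finset (List (α × Bool)) :=
  ((List.finite_length_eq (α × Bool) l).inter_of_right {w | FreeGroup.IsReduced w}).toFinset

theorem mem_reducedWords [Finite α] {l : ℕ} {w : List (α × Bool)} :
    w ∈ reducedWords α l ↔ FreeGroup.IsReduced w ∧ w.length = l := by
  simp [reducedWords]

theorem reducedWords_zero [Finite α] : reducedWords α 0 = {[]} := by
  ext w
  rw [mem_reducedWords, Finset.mem_singleton, List.length_eq_zero_iff, and_iff_right_iff_imp]
  rintro rfl
  exact .nil

variable [Fintype α]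

open Classical in
/-- The letters that can be prepended to `w` so that the result is reduced. -/
noncomputable def prependableLetters (w : List (α × Bool)) : Finset (α × Bool) :=
  {a | FreeGroup.IsReduced (a :: w)}

theorem mem_prependableLetters {w : List (α × Bool)} {a : α × Bool} :
    a ∈ prependableLetters w ↔ FreeGroup.IsReduced (a :: w) := by
  simp [prependableLetters]

theorem prependableLetters_nil : prependableLetters ([] : List (α × Bool)) = Finset.univ := by
  ext a
  simp [mem_prependableLetters]

theorem prependableLetters_cons [DecidableEq α] {b : α × Bool} {w : List (α × Bool)}
    (hw : FreeGroup.IsReduced (b :: w)) :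
    prependableLetters (b :: w) = Finset.univ.erase (invLetter b) := by
  ext a
  rw [mem_prependableLetters, isReduced_cons_cons_iff_ne_invLetter, Finset.mem_erase]
  simp only [hw, Finset.mem_univ]

variable (α) in
/-- The number of ways to prolong a reduced word of length `l` by one letter. -/
def branching (l : ℕ) : ℕ :=
  if l = 0 then Fintype.card (α × Bool) else Fintype.card (α × Bool) - 1

theorem branching_succ (l : ℕ) : branching α (l + 1) = Fintype.card (α × Bool) - 1 :=
  if_neg l.succ_ne_zero

theorem one_lt_card_letters [Nonempty α] : 1 < Fintype.card (α × Bool) := by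
  have := Fintype.card_pos (α := α)
  rw [Fintype.card_prod, Fintype.card_bool]
  lia

theorem branching_ne_zero [Nonempty α] (l : ℕ) : branching α l ≠ 0 := by
  have := one_lt_card_letters (α := α)
  rw [branching]
  split_ifs <;> lia

theorem card_prependableLetters {l : ℕ} {w : List (α × Bool)} (hw : w ∈ reducedWords α l) :
    #(prependableLetters w) = branching α l := by
  classical
  obtain ⟨hred, rfl⟩ := mem_reducedWords.1 hw
  cases w with
  | nil => rw [prependableLetters_nil, Finset.card_univ, List.length_nil, branching, if_pos rfl]
  | cons b w =>
    rw [prependableLetters_cons hred, Finset.card_erase_of_mem (Finset.mem_univ _),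
      Finset.card_univ, List.length_cons, branching_succ]

theorem sum_reducedWords_succ {M : Type*} [AddCommMonoid M] (f : List (α × Bool) → M) (l : ℕ) :
    ∑ w ∈ reducedWords α (l + 1), f w =
      ∑ w ∈ reducedWords α l, ∑ a ∈ prependableLetters w, f (a :: w) := by
  rw [Finset.sum_sigma']
  symm
  refine Finset.sum_bij (fun p _ => p.2 :: p.1) ?_ ?_ ?_ fun _ _ => rfl
  · rintro ⟨w, a⟩ h
    obtain ⟨hw, ha⟩ := Finset.mem_sigma.1 h
    exact mem_reducedWords.2
      ⟨mem_prependableLetters.1 ha, congrArg (· + 1) (mem_reducedWords.1 hw).2⟩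
  · rintro ⟨w, a⟩ - ⟨w', a'⟩ - h
    obtain ⟨rfl, rfl⟩ := List.cons.inj h
    rfl
  · intro w hw
    obtain ⟨hred, hlen⟩ := mem_reducedWords.1 hw
    obtain ⟨a, u, rfl⟩ := List.exists_cons_of_length_eq_add_one hlen
    exact ⟨⟨u, a⟩, Finset.mem_sigma.2 ⟨mem_reducedWords.2
      ⟨hred.infix (List.suffix_cons a u).isInfix, Nat.succ.inj hlen⟩,
      mem_prependableLetters.2 hred⟩, rfl⟩

theorem sum_reducedWords_succ_tail {M : Type*} [AddCommMonoid M] (f : List (α × Bool) → M)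
    (l : ℕ) :
    ∑ w ∈ reducedWords α (l + 1), f w.tail = branching α l • ∑ w ∈ reducedWords α l, f w := by
  rw [sum_reducedWords_succ, Finset.smul_sum]
  refine Finset.sum_congr rfl fun w hw => ?_
  simp only [List.tail_cons, Finset.sum_const, card_prependableLetters hw]

theorem card_reducedWords_succ (l : ℕ) :
    #(reducedWords α (l + 1)) = branching α l * #(reducedWords α l) := by
  simpa only [Finset.card_eq_sum_ones, smul_eq_mul] using
    sum_reducedWords_succ_tail (fun _ : List (α × Bool) => (1 : ℕ)) l

theorem sum_letters_mk_cons {M : Type*} [AddCommMonoid M] (F : FreeGroup α → M) {l : ℕ}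
    {w : List (α × Bool)} (hw : w ∈ reducedWords α (l + 1)) :
    ∑ a, F (FreeGroup.mk (a :: w)) =
      ∑ a ∈ prependableLetters w, F (FreeGroup.mk (a :: w)) + F (FreeGroup.mk w.tail) := by
  classical
  obtain ⟨hred, hlen⟩ := mem_reducedWords.1 hw
  obtain ⟨b, u, rfl⟩ := List.exists_cons_of_length_eq_add_one hlen
  rw [prependableLetters_cons hred, List.tail_cons, ← mk_invLetter_cons_cons b u]
  exact (Finset.sum_erase_add _ _ (Finset.mem_univ (invLetter b))).symm

omit [Fintype α] in
theorem card_reducedWords_ne_zero [Finite α] [Nonempty α] (l : ℕ) :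
    #(reducedWords α l) ≠ 0 := by
  have := Fintype.ofFinite α
  induction l with
  | zero => simp [reducedWords_zero]
  | succ l ih =>
    rw [card_reducedWords_succ]
    exact mul_ne_zero (branching_ne_zero l) ih

end ReducedWords

section SphereAverage

variable {α E : Type*} [AddCommGroup E] [Module ℝ E]

/-- The average of `F` over the sphere of radius `l` of the free group, that is, over the elements
represented by the reduced words of length `l`. -/
noncomputable def sphereAverage [Finite α] (F : FreeGroup α → E) (l : ℕ) : E :=
  (#(reducedWords α l) : ℝ)⁻¹ • ∑ w ∈ reducedWords α l, F (FreeGroup.mk w)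

theorem map_sphereAverage [Finite α] {E' : Type*} [AddCommGroup E'] [Module ℝ E']
    (T : E →ₗ[ℝ] E') (F : FreeGroup α → E) (l : ℕ) :
    T (sphereAverage F l) = sphereAverage (fun x => T (F x)) l := by
  simp only [sphereAverage, map_smul, map_sum]

theorem sphereAverage_const [Finite α] [Nonempty α] (c : E) (l : ℕ) :
    sphereAverage (fun _ : FreeGroup α => c) l = c := by
  rw [sphereAverage, Finset.sum_const, ← Nat.cast_smul_eq_nsmul ℝ,
    inv_smul_smul₀ (Nat.cast_ne_zero.2 (card_reducedWords_ne_zero l))]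

theorem norm_sphereAverage_le {E : Type*} [SeminormedAddCommGroup E] [NormedSpace ℝ E]
    [Finite α] [Nonempty α] {F : FreeGroup α → E} {C : ℝ} (hF : ∀ x, ‖F x‖ ≤ C) (l : ℕ) :
    ‖sphereAverage F l‖ ≤ C := by
  have hcard : (0 : ℝ) < #(reducedWords α l) :=
    Nat.cast_pos.2 (Nat.pos_of_ne_zero (card_reducedWords_ne_zero l))
  rw [sphereAverage, norm_smul, norm_inv, Real.norm_natCast, inv_mul_le_iff₀ hcard,
    ← nsmul_eq_mul]
  exact (norm_sum_le _ _).trans (Finset.sum_le_card_nsmul _ _ _ fun w _ => hF _)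

theorem sum_letters_sphereAverage_mul [Fintype α] [Nonempty α] (F : FreeGroup α → E) (l : ℕ) :
    ∑ a, sphereAverage (fun x => F (FreeGroup.mk [a] * x)) (l + 1) =
      (Fintype.card (α × Bool) - 1 : ℝ) • sphereAverage F (l + 2) + sphereAverage F l := by
  have hsum : ∑ w ∈ reducedWords α (l + 1), ∑ a, F (FreeGroup.mk (a :: w)) =
      ∑ w ∈ reducedWords α (l + 2), F (FreeGroup.mk w) +
        branching α l • ∑ w ∈ reducedWords α l, F (FreeGroup.mk w) := by
    rw [Finset.sum_congr rfl fun w hw => sum_letters_mk_cons F hw, Finset.sum_add_distrib,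
      ← sum_reducedWords_succ fun w => F (FreeGroup.mk w),
      sum_reducedWords_succ_tail fun w => F (FreeGroup.mk w)]
  have hcard : (#(reducedWords α (l + 2)) : ℝ) =
      (Fintype.card (α × Bool) - 1) * #(reducedWords α (l + 1)) := by
    rw [card_reducedWords_succ, branching_succ, Nat.cast_mul,
      Nat.cast_sub one_lt_card_letters.le, Nat.cast_one]
  have hq : (Fintype.card (α × Bool) - 1 : ℝ) ≠ 0 :=
    (sub_pos.2 (Nat.one_lt_cast.2 one_lt_card_letters)).ne'
  have hb : (branching α l : ℝ) ≠ 0 := Nat.cast_ne_zero.2 (branching_ne_zero l)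
  calc ∑ a, sphereAverage (fun x => F (FreeGroup.mk [a] * x)) (l + 1)
    _ = (#(reducedWords α (l + 1)) : ℝ)⁻¹ •
        ∑ w ∈ reducedWords α (l + 1), ∑ a, F (FreeGroup.mk (a :: w)) := by
      simp only [sphereAverage, FreeGroup.mul_mk, List.singleton_append, ← Finset.smul_sum]
      rw [Finset.sum_comm]
    _ = _ := by
      rw [hsum, smul_add, sphereAverage, hcard, mul_inv, smul_smul, mul_inv_cancel_left₀ hq,
        sphereAverage, card_reducedWords_succ, Nat.cast_mul, mul_inv_rev,
        ← Nat.cast_smul_eq_nsmul ℝ, smul_smul, inv_mul_cancel_right₀ hb]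

end SphereAverage

section Recurrence

variable {E : Type*} [NormedAddCommGroup E] [InnerProductSpace ℝ E]
  {A : E →ₗ[ℝ] E} {q : ℝ} {f : ℕ → E}

/-- The energy of two consecutive terms `x`, `y` of a solution of the recurrence
`A (f (l + 1)) = q • f (l + 2) + f l`; it decreases along the solution. -/
noncomputable def recurrenceEnergy (A : E →ₗ[ℝ] E) (q : ℝ) (x y : E) : ℝ :=
  (q + 1) * (‖y‖ ^ 2 + ‖x‖ ^ 2) - 2 * ⟪A y, x⟫

theorem recurrenceEnergy_nonneg (hq : 0 ≤ q + 1) (hA : ∀ x, ‖A x‖ ≤ (q + 1) * ‖x‖) (x y : E) :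
    0 ≤ recurrenceEnergy A q x y := by
  have hinner : ⟪A y, x⟫ ≤ (q + 1) * ‖y‖ * ‖x‖ :=
    (real_inner_le_norm _ _).trans (mul_le_mul_of_nonneg_right (hA y) (norm_nonneg x))
  have hsq : 0 ≤ (q + 1) * (‖y‖ - ‖x‖) ^ 2 := mul_nonneg hq (sq_nonneg _)
  rw [recurrenceEnergy]
  linarith

theorem recurrenceEnergy_sub_succ (hA : A.IsSymmetric)
    (hf : ∀ l, A (f (l + 1)) = q • f (l + 2) + f l) (l : ℕ) :
    recurrenceEnergy A q (f l) (f (l + 1)) - recurrenceEnergy A q (f (l + 1)) (f (l + 2)) =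
      (q - 1) * ‖f (l + 2) - f l‖ ^ 2 := by
  have hlow : ⟪A (f (l + 1)), f l⟫ = q * ⟪f (l + 2), f l⟫ + ‖f l‖ ^ 2 := by
    rw [hf, inner_add_left, real_inner_smul_left, real_inner_self_eq_norm_sq]
  have hhigh : ⟪A (f (l + 2)), f (l + 1)⟫ = q * ‖f (l + 2)‖ ^ 2 + ⟪f (l + 2), f l⟫ := by
    rw [hA, hf, inner_add_right, real_inner_smul_right, real_inner_self_eq_norm_sq]
  rw [recurrenceEnergy, recurrenceEnergy, hlow, hhigh, norm_sub_sq_real]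
  ring

theorem tendsto_sub_of_recurrence (hA : A.IsSymmetric) (hbound : ∀ x, ‖A x‖ ≤ (q + 1) * ‖x‖)
    (hq : 1 < q) (hf : ∀ l, A (f (l + 1)) = q • f (l + 2) + f l) :
    Tendsto (fun l => f (l + 2) - f l) atTop (𝓝 0) := by
  let W : ℕ → ℝ := fun l => recurrenceEnergy A q (f l) (f (l + 1))
  have hdrop : ∀ l, W l - W (l + 1) = (q - 1) * ‖f (l + 2) - f l‖ ^ 2 :=
    recurrenceEnergy_sub_succ hA hf
  have hanti : Antitone W := antitone_nat_of_succ_le fun l =>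
    sub_nonneg.1 ((hdrop l).symm ▸ mul_nonneg (sub_pos.2 hq).le (sq_nonneg _))
  have hW : Tendsto W atTop (𝓝 (⨅ l, W l)) :=
    tendsto_atTop_ciInf hanti
      ⟨0, Set.forall_mem_range.2 fun l => recurrenceEnergy_nonneg (by linarith) hbound _ _⟩
  have hsq : Tendsto (fun l => ‖f (l + 2) - f l‖ ^ 2) atTop (𝓝 0) := by
    have h := (hW.sub ((tendsto_add_atTop_iff_nat 1).2 hW)).const_mul (q - 1)⁻¹
    rw [sub_self, mul_zero] at h
    exact h.congr fun l => by rw [hdrop, inv_mul_cancel_left₀ (sub_pos.2 hq).ne']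
  rw [tendsto_zero_iff_norm_tendsto_zero]
  simpa using hsq.sqrt

theorem tendsto_smul_sub_of_recurrence (hA : A.IsSymmetric)
    (hbound : ∀ x, ‖A x‖ ≤ (q + 1) * ‖x‖) (hq : 1 < q)
    (hf : ∀ l, A (f (l + 1)) = q • f (l + 2) + f l) :
    Tendsto (fun l => (q + 1) • (f l + f (l + 1)) - A (f l + f (l + 1))) atTop (𝓝 0) := by
  have hsub := tendsto_sub_of_recurrence hA hbound hq hf
  have h := hsub.sub (((tendsto_add_atTop_iff_nat 1).2 hsub).const_smul q)
  rw [smul_zero, sub_zero] at h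
  rw [← tendsto_add_atTop_iff_nat 1]
  refine h.congr fun l => ?_
  rw [map_add, hf, hf]
  module

end Recurrence

section IsometricAction

variable {E : Type*} [NormedAddCommGroup E] [InnerProductSpace ℝ E]

theorem inner_map_left_eq_inner_map_inv {F : Type*} [Group F] (U : F →* (E ≃ₗᵢ[ℝ] E)) (g : F)
    (x y : E) : ⟪U g x, y⟫ = ⟪x, U g⁻¹ y⟫ := by
  rw [map_inv, ← LinearIsometryEquiv.inner_map_map (U g) x]
  exact congrArg _ ((U g).apply_symm_apply y).symm

variable {α : Type*} (U : FreeGroup α →* (E ≃ₗᵢ[ℝ] E))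

/-- The sum of two consecutive sphere averages: single averages need not become invariant, as the
action may see the parity of the word length. -/
noncomputable def pairSphereAverage [Finite α] (v : E) (l : ℕ) : E :=
  sphereAverage (fun x => U x v) l + sphereAverage (fun x => U x v) (l + 1)

variable [Fintype α]

/-- The sum of the operators by which the letters `x_i` and `x_i⁻¹` act. -/
noncomputable def letterSum : E →ₗ[ℝ] E :=
  ∑ a : α × Bool, ((U (FreeGroup.mk [a])).toLinearEquiv : E →ₗ[ℝ] E)

theorem letterSum_apply (x : E) : letterSum U x = ∑ a, U (FreeGroup.mk [a]) x := by
  simp [letterSum]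

theorem isSymmetric_letterSum : (letterSum U).IsSymmetric := by
  intro x y
  simp only [letterSum_apply, sum_inner, inner_sum, inner_map_left_eq_inner_map_inv,
    ← mk_invLetter]
  exact Equiv.sum_comp invLetter fun a => ⟪x, U (FreeGroup.mk [a]) y⟫

theorem norm_letterSum_le (x : E) : ‖letterSum U x‖ ≤ Fintype.card (α × Bool) * ‖x‖ := by
  rw [letterSum_apply, ← nsmul_eq_mul, ← Finset.card_univ]
  exact (norm_sum_le _ _).trans (Finset.sum_le_card_nsmul _ _ _ fun a _ =>
    ((U (FreeGroup.mk [a])).norm_map x).le)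

theorem sum_norm_map_sub_sq (x : E) :
    ∑ a, ‖U (FreeGroup.mk [a]) x - x‖ ^ 2 =
      2 * ⟪(Fintype.card (α × Bool) : ℝ) • x - letterSum U x, x⟫ := by
  simp only [norm_sub_sq_real, LinearIsometryEquiv.norm_map, letterSum_apply, inner_sub_left,
    sum_inner, inner_smul_left, real_inner_self_eq_norm_sq, RCLike.conj_to_real,
    Finset.sum_add_distrib, Finset.sum_sub_distrib, Finset.sum_const, Finset.card_univ,
    nsmul_eq_mul, ← Finset.mul_sum]
  ring

theorem tendsto_map_sub_of_tendsto_letterSum {h : ℕ → E} {C : ℝ} (hC : ∀ l, ‖h l‖ ≤ C)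
    (hh : Tendsto (fun l => (Fintype.card (α × Bool) : ℝ) • h l - letterSum U (h l)) atTop (𝓝 0))
    (g : FreeGroup α) : Tendsto (fun l => U g (h l) - h l) atTop (𝓝 0) := by
  have hletter : ∀ a, Tendsto (fun l => U (FreeGroup.mk [a]) (h l) - h l) atTop (𝓝 0) := by
    intro a
    have hinner : Tendsto (fun l => 2 * ⟪(Fintype.card (α × Bool) : ℝ) • h l - letterSum U (h l),
        h l⟫) atTop (𝓝 0) := by
      have hbound := hh.norm.mul_const C
      rw [norm_zero, zero_mul] at hbound
      rw [← mul_zero (2 : ℝ)]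
      exact (squeeze_zero_norm (fun l => (norm_inner_le_norm _ _).trans
        (mul_le_mul_of_nonneg_left (hC l) (norm_nonneg _))) hbound).const_mul 2
    simp only [← sum_norm_map_sub_sq] at hinner
    have hsq : Tendsto (fun l => ‖U (FreeGroup.mk [a]) (h l) - h l‖ ^ 2) atTop (𝓝 0) :=
      squeeze_zero (fun l => sq_nonneg _) (fun l => Finset.single_le_sum
        (f := fun a => ‖U (FreeGroup.mk [a]) (h l) - h l‖ ^ 2) (fun _ _ => sq_nonneg _)
        (Finset.mem_univ a)) hinner
    rw [tendsto_zero_iff_norm_tendsto_zero]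
    simpa using hsq.sqrt
  induction g using FreeGroup.induction_on with
  | C1 => simp
  | of i => exact hletter (i, true)
  | inv_of i _ => exact hletter (i, false)
  | mul x y hx hy =>
    have hxy := (((U x).continuous.tendsto 0).comp hy).add hx
    rw [map_zero, add_zero] at hxy
    refine hxy.congr fun l => ?_
    simp [map_sub]

omit [Fintype α] in
theorem tendsto_map_pairSphereAverage_sub [Finite α] [Nontrivial α] (v : E)
    (g : FreeGroup α) :
    Tendsto (fun l => U g (pairSphereAverage U v l) - pairSphereAverage U v l) atTop (𝓝 0) := by
  have := Fintype.ofFinite α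
  let σ : ℕ → E := sphereAverage fun x => U x v
  have hσ : ∀ l, ‖σ l‖ ≤ ‖v‖ := norm_sphereAverage_le fun x => ((U x).norm_map v).le
  have hrec : ∀ l, letterSum U (σ (l + 1)) =
      (Fintype.card (α × Bool) - 1 : ℝ) • σ (l + 2) + σ l := by
    intro l
    rw [← sum_letters_sphereAverage_mul fun x => U x v, letterSum_apply]
    refine Finset.sum_congr rfl fun a _ => ?_
    simp only [map_mul]
    exact map_sphereAverage ((U (FreeGroup.mk [a])).toLinearEquiv : E →ₗ[ℝ] E) _ _
  have hq : (1 : ℝ) < Fintype.card (α × Bool) - 1 := by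
    have h := Fintype.one_lt_card (α := α)
    rw [Fintype.card_prod, Fintype.card_bool, lt_sub_iff_add_lt]
    exact_mod_cast (by lia : 1 + 1 < Fintype.card α * 2)
  refine tendsto_map_sub_of_tendsto_letterSum U
    (fun l => (norm_add_le _ _).trans (add_le_add (hσ l) (hσ (l + 1)))) ?_ g
  simpa using tendsto_smul_sub_of_recurrence (isSymmetric_letterSum U)
    (by simpa using norm_letterSum_le U) hq hrec

end IsometricAction

section FiniteGroup

variable {α G : Type*} [Group G]

theorem map_mk_mem_iff_even_length {π : FreeGroup α →* G} {H : Subgroup G} (hH : H.index = 2)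
    (hπ : ∀ i, π (FreeGroup.of i) ∉ H) (w : List (α × Bool)) :
    π (FreeGroup.mk w) ∈ H ↔ Even w.length := by
  induction w with
  | nil => exact iff_of_true ((map_one π).symm ▸ H.one_mem) .zero
  | cons a w ih =>
    have hletter : π (FreeGroup.mk [a]) ∉ H := by
      obtain ⟨i, _ | _⟩ := a
      · have hinv : FreeGroup.mk [(i, false)] = (FreeGroup.of i)⁻¹ := rfl
        rw [hinv, map_inv, H.inv_mem_iff]
        exact hπ i
      · exact hπ i
    have hmul : FreeGroup.mk (a :: w) = FreeGroup.mk [a] * FreeGroup.mk w := rfl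
    rw [hmul, map_mul, Subgroup.mul_mem_iff_of_index_two hH, ih, List.length_cons, Nat.even_add_one]
    simp only [hletter, false_iff]

theorem sum_map_pairSphereAverage {E : Type*} [NormedAddCommGroup E] [InnerProductSpace ℝ E]
    [Finite α] [Nonempty α] [Fintype G] (π : FreeGroup α →* G) (U : G →* (E ≃ₗᵢ[ℝ] E)) (v : E)
    (l : ℕ) :
    ∑ g, U g (pairSphereAverage (U.comp π) v l) = (2 : ℝ) • ∑ g, U g v := by
  have hinv : ∀ x : FreeGroup α, ∑ g, U g (U (π x) v) = ∑ g, U g v := fun x => by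
    simpa using Equiv.sum_comp (Equiv.mulRight (π x)) fun g => U g v
  have hσ : ∀ l, ∑ g, U g (sphereAverage (fun x => U (π x) v) l) = ∑ g, U g v := fun l => by
    have h := map_sphereAverage (∑ g, ((U g).toLinearEquiv : E →ₗ[ℝ] E)) (fun x => U (π x) v) l
    simpa [hinv, sphereAverage_const] using h
  simp [pairSphereAverage, Finset.sum_add_distrib, hσ, two_smul]

theorem tendsto_pairSphereAverage {E : Type*} [NormedAddCommGroup E] [InnerProductSpace ℝ E]
    [Finite α] [Nontrivial α] [Fintype G] {π : FreeGroup α →* G} (hπ : Function.Surjective π)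
    (U : G →* (E ≃ₗᵢ[ℝ] E)) (v : E) :
    Tendsto (pairSphereAverage (U.comp π) v) atTop
      (𝓝 ((2 / Fintype.card G : ℝ) • ∑ g, U g v)) := by
  have hcard : (Fintype.card G : ℝ) ≠ 0 := Nat.cast_ne_zero.2 Fintype.card_ne_zero
  have hinv : ∀ g, Tendsto (fun l => U g (pairSphereAverage (U.comp π) v l) -
      pairSphereAverage (U.comp π) v l) atTop (𝓝 0) := by
    intro g
    obtain ⟨x, rfl⟩ := hπ g
    exact tendsto_map_pairSphereAverage_sub (U.comp π) v x
  have hsum := (tendsto_finsetSum Finset.univ fun g _ => hinv g).const_smul (Fintype.card G : ℝ)⁻¹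
  rw [Finset.sum_const_zero, smul_zero] at hsum
  have h := (tendsto_const_nhds (x := (2 / Fintype.card G : ℝ) • ∑ g, U g v)).sub hsum
  rw [sub_zero] at h
  refine h.congr fun l => ?_
  rw [Finset.sum_sub_distrib, sum_map_pairSphereAverage, Finset.sum_const, Finset.card_univ,
    ← Nat.cast_smul_eq_nsmul ℝ, smul_sub, inv_smul_smul₀ hcard, smul_smul, div_eq_inv_mul,
    sub_sub_cancel]

variable (G) in
/-- The left regular representation of a finite group, by linear isometries of `ℓ²(G)`. -/
noncomputable def leftRegularIsometry [Fintype G] :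
    G →* (EuclideanSpace ℝ G ≃ₗᵢ[ℝ] EuclideanSpace ℝ G) where
  toFun g := LinearIsometryEquiv.piLpCongrLeft 2 ℝ ℝ (Equiv.mulLeft g)
  map_one' := by
    rw [Equiv.mulLeft_one]
    rfl
  map_mul' g h := by
    rw [Equiv.mulLeft_mul]
    ext x i
    rfl

theorem leftRegularIsometry_single_one [Fintype G] [DecidableEq G] (g : G) :
    leftRegularIsometry G g (EuclideanSpace.single 1 1) = EuclideanSpace.single g 1 := by
  simp [leftRegularIsometry]

variable [DecidableEq α]

/-- The proportion, among the reduced words of length `l`, of those evaluating to `g` under `π`. -/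
noncomputable def hitProportion (π : FreeGroup α →* G) (g : G) (l : ℕ) : ℝ :=
  (Nat.card {w : List (α × Bool) //
      FreeGroup.reduce w = w ∧ w.length = l ∧ π (FreeGroup.mk w) = g} : ℝ) /
    (Nat.card {w : List (α × Bool) // FreeGroup.reduce w = w ∧ w.length = l} : ℝ)

theorem hitProportion_eq_zero {π : FreeGroup α →* G} {g : G} {l : ℕ}
    (h : ∀ w : List (α × Bool), w.length = l → π (FreeGroup.mk w) ≠ g) :
    hitProportion π g l = 0 := by
  have : IsEmpty {w : List (α × Bool) //
      FreeGroup.reduce w = w ∧ w.length = l ∧ π (FreeGroup.mk w) = g} :=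
    ⟨fun w => h w w.2.2.1 w.2.2.2⟩
  rw [hitProportion, Nat.card_of_isEmpty, Nat.cast_zero, zero_div]

theorem hitProportion_eq_sphereAverage [Finite α] [DecidableEq G] (π : FreeGroup α →* G) (g : G)
    (l : ℕ) :
    hitProportion π g l = sphereAverage (fun x => if g = π x then (1 : ℝ) else 0) l := by
  have hsphere : Nat.card {w : List (α × Bool) // FreeGroup.reduce w = w ∧ w.length = l} =
      #(reducedWords α l) :=
    Nat.subtype_card _ fun w => by rw [mem_reducedWords, FreeGroup.isReduced_iff_reduce_eq]
  have hfiber : Nat.card {w : List (α × Bool) //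
      FreeGroup.reduce w = w ∧ w.length = l ∧ π (FreeGroup.mk w) = g} =
      #{w ∈ reducedWords α l | g = π (FreeGroup.mk w)} :=
    Nat.subtype_card _ fun w => by
      rw [Finset.mem_filter, mem_reducedWords, FreeGroup.isReduced_iff_reduce_eq, and_assoc,
        eq_comm (a := g)]
  rw [hitProportion, sphereAverage, hsphere, hfiber, Finset.sum_boole, smul_eq_mul,
    div_eq_inv_mul]

theorem tendsto_hitProportion_add_succ [Finite α] [Nontrivial α] [Finite G]
    {π : FreeGroup α →* G} (hπ : Function.Surjective π) (g : G) :
    Tendsto (fun l => hitProportion π g l + hitProportion π g (l + 1)) atTop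
      (𝓝 (2 / Nat.card G)) := by
  classical
  have := Fintype.ofFinite G
  let coord : EuclideanSpace ℝ G →L[ℝ] ℝ := EuclideanSpace.proj g
  have h := (coord.continuous.tendsto _).comp
    (tendsto_pairSphereAverage hπ (leftRegularIsometry G) (EuclideanSpace.single 1 1))
  have hcoord : ∀ l, coord (sphereAverage
      (fun x => leftRegularIsometry G (π x) (EuclideanSpace.single 1 1)) l) =
      hitProportion π g l := fun l => by
    rw [hitProportion_eq_sphereAverage]
    refine (map_sphereAverage coord.toLinearMap _ l).trans ?_
    simp [coord, leftRegularIsometry_single_one]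
  have hlim : coord ((2 / Fintype.card G : ℝ) •
      ∑ x, leftRegularIsometry G x (EuclideanSpace.single 1 1)) = 2 / Nat.card G := by
    simp [coord, leftRegularIsometry_single_one]
  rw [hlim] at h
  refine h.congr fun l => ?_
  rw [← hcoord, ← hcoord, ← map_add]
  rfl

end FiniteGroup

/-- Let `G` be a finite group, `φ : X → G` a function whose image generates `G`, and `H ≤ G` a
subgroup of index 2 with `φ x_i ∉ H` for all `i`.  Then every reduced word of even length
evaluates in `G` to an element of `H`, every reduced word of odd length evaluates to an element
of `G ∖ H`, and moreover for `g ∈ H` the proportion of reduced words of length `2l` evaluating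
to `g` converges to `2/|G|`, while for `g ∈ G ∖ H` the proportion of reduced words of length
`2l+1` evaluating to `g` converges to `2/|G|`, as `l → ∞`. -/
theorem nonbacktracking_walk_equidistribution_periodic
    (n : ℕ) (hn : 2 ≤ n) (G : Type*) [Group G] [Finite G]
    (φ : Fin n → G) (hgen : Subgroup.closure (Set.range φ) = ⊤)
    (H : Subgroup G) (hH : H.index = 2) (hxH : ∀ i, φ i ∉ H) :
    (∀ w : List (Fin n × Bool), FreeGroup.reduce w = w → Even w.length → evalWord φ w ∈ H) ∧
    (∀ w : List (Fin n × Bool), FreeGroup.reduce w = w → Odd w.length → evalWord φ w ∉ H) ∧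
    (∀ g ∈ H,
      Tendsto (fun l =>
          (Nat.card {w : List (Fin n × Bool) //
              FreeGroup.reduce w = w ∧ w.length = 2 * l ∧ evalWord φ w = g} : ℝ) /
            (Nat.card {w : List (Fin n × Bool) //
              FreeGroup.reduce w = w ∧ w.length = 2 * l} : ℝ))
        atTop (nhds (2 / (Nat.card G : ℝ)))) ∧
    (∀ g ∉ H,
      Tendsto (fun l =>
          (Nat.card {w : List (Fin n × Bool) //
              FreeGroup.reduce w = w ∧ w.length = 2 * l + 1 ∧ evalWord φ w = g} : ℝ) /
            (Nat.card {w : List (Fin n × Bool) //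
              FreeGroup.reduce w = w ∧ w.length = 2 * l + 1} : ℝ))
        atTop (nhds (2 / (Nat.card G : ℝ)))) := by
  have hsurj : Function.Surjective (FreeGroup.lift φ) :=
    FreeGroup.lift_surjective_iff_closure_range_eq_top.2 hgen
  have : Nontrivial (Fin n) := Fin.nontrivial_iff_two_le.2 hn
  have hparity : ∀ w, evalWord φ w ∈ H ↔ Even w.length :=
    map_mk_mem_iff_even_length hH fun i => by simpa using hxH i
  have hpair (g : G) := (tendsto_hitProportion_add_succ hsurj g).comp
    (tendsto_id.const_mul_atTop' (r := 2) two_pos)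
  refine ⟨fun w _ hw => (hparity w).2 hw, fun w _ hw => ?_, fun g hg => ?_, fun g hg => ?_⟩
  · rwa [hparity, Nat.not_even_iff_odd]
  · refine (hpair g).congr fun l => ?_
    have hodd : hitProportion (FreeGroup.lift φ) g (2 * l + 1) = 0 := by
      refine hitProportion_eq_zero ?_
      rintro w hw rfl
      exact Nat.not_even_bit1 l (hw ▸ (hparity w).1 hg)
    exact (congrArg _ hodd).trans (add_zero _)
  · refine (hpair g).congr fun l => ?_
    have heven : hitProportion (FreeGroup.lift φ) g (2 * l) = 0 := by
      refine hitProportion_eq_zero ?_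
      rintro w hw rfl
      exact hg ((hparity w).2 (hw ▸ even_two_mul l))
    exact (congrArg (· + _) heven).trans (zero_add _)
end
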